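/- arXiv:2211.02695 — 2 statements merged into one kernel-verified Lean document; each statement's English description precedes it below -/
import Mathlib

section
/- Let J ≥ 0 and let X be a real 2^J × 2^J matrix. Define the recursive Haar approximation sequence by 𝒜_0 = X and 𝒜_{k+1} = H_{(2^{J-k-1})} · 𝒜_k · H_{(2^{J-k-1})}^T for 0 ≤ k < J, where H_{(n)} denotes the n × 2n Haar averaging matrix. Then 𝒜_J is a 1 × 1 matrix whose unique entry equals 2^J · GAP(X). In particular, the J = log₂(2^J)-level approximation component of the 2D discrete Haar wavelet transform of X is proportional to the global average pooling of X, with proportionality constant 2^J. -/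
open Matrix BigOperators

/-- Global average pooling of a real matrix. -/
noncomputable def GAP {m n : ℕ} (X : Matrix (Fin m) (Fin n) ℝ) : ℝ :=
  (∑ i, ∑ j, X i j) / (m * n)

/-- The Haar averaging matrix `H_(n) ∈ ℝ^{n×2n}`:
`H i (2i) = H i (2i+1) = 1/√2` and `0` otherwise (0-based indices). -/
noncomputable def haarH (n : ℕ) : Matrix (Fin n) (Fin (2 * n)) ℝ :=
  fun i j => if (j : ℕ) = 2 * i ∨ (j : ℕ) = 2 * i + 1 then 1 / Real.sqrt 2 else 0

/-!
Every column of `haarH n` sums to `1 / √2`, so `B ↦ H B Hᵀ` halves the sum of all entries while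
dividing the number of entries by four: each level of the transform doubles the average. After `J`
levels a single entry is left, and it is its own average.
-/

section SumEntries

variable {R l m n o : Type*} [Fintype l] [Fintype m] [Fintype n] [Fintype o]

theorem one_dotProduct_mulVec_one [NonAssocSemiring R] (B : Matrix m n R) :
    1 ⬝ᵥ B *ᵥ 1 = ∑ i, ∑ j, B i j := by
  simp only [one_dotProduct, mulVec, dotProduct_one]

theorem sum_sum_mul_mul_transpose_of_one_vecMul [CommSemiring R]
    {P : Matrix l m R} {Q : Matrix o n R} {c d : R}
    (hP : 1 ᵥ* P = c • 1) (hQ : 1 ᵥ* Q = d • 1) (B : Matrix m n R) :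
    ∑ i, ∑ j, (P * B * Qᵀ) i j = c * d * ∑ i, ∑ j, B i j :=
  calc
    ∑ i, ∑ j, (P * B * Qᵀ) i j = (1 ᵥ* P) ⬝ᵥ B *ᵥ (1 ᵥ* Q) := by
      rw [← one_dotProduct_mulVec_one, ← mulVec_mulVec, ← mulVec_mulVec, mulVec_transpose,
        dotProduct_mulVec]
    _ = c * d * ∑ i, ∑ j, B i j := by
      rw [hP, hQ, mulVec_smul, smul_dotProduct, dotProduct_smul, one_dotProduct_mulVec_one,
        smul_eq_mul, smul_eq_mul, mul_assoc]

end SumEntries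

theorem one_vecMul_haarH (n : ℕ) : 1 ᵥ* haarH n = (1 / √2) • 1 := by
  ext j
  have column_support_iff (i : Fin n) :
      ((j : ℕ) = 2 * i ∨ (j : ℕ) = 2 * i + 1) ↔ i = ⟨j / 2, by omega⟩ := by
    simp only [Fin.ext_iff]
    omega
  simp [vecMul, one_dotProduct, haarH, column_support_iff]

theorem sum_sum_haarH_mul_mul_transpose {m n : ℕ} (B : Matrix (Fin (2 * m)) (Fin (2 * n)) ℝ) :
    ∑ i, ∑ j, (haarH m * B * (haarH n)ᵀ) i j = (∑ i, ∑ j, B i j) / 2 := by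
  rw [sum_sum_mul_mul_transpose_of_one_vecMul (one_vecMul_haarH m) (one_vecMul_haarH n),
    div_mul_div_comm, Real.mul_self_sqrt zero_le_two]
  ring

theorem GAP_haarH_mul_mul_transpose {m n : ℕ} (B : Matrix (Fin (2 * m)) (Fin (2 * n)) ℝ) :
    GAP (haarH m * B * (haarH n)ᵀ) = 2 * GAP B := by
  rw [GAP, GAP, sum_sum_haarH_mul_mul_transpose]
  push_cast
  ring

theorem GAP_reindex {m n m' n' : ℕ} (e : Fin m ≃ Fin m') (f : Fin n ≃ Fin n')
    (B : Matrix (Fin m) (Fin n) ℝ) : GAP (reindex e f B) = GAP B := by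
  obtain rfl : m = m' := Fin.equiv_iff_eq.mp ⟨e⟩
  obtain rfl : n = n' := Fin.equiv_iff_eq.mp ⟨f⟩
  simp only [GAP, reindex_apply, submatrix_apply, Equiv.sum_comp f.symm,
    Equiv.sum_comp e.symm fun i => ∑ j, B i j]

theorem GAP_eq_apply {m n : ℕ} (hm : m = 1) (hn : n = 1) (B : Matrix (Fin m) (Fin n) ℝ)
    (i : Fin m) (j : Fin n) : GAP B = B i j := by
  subst hm hn
  simp [GAP, Subsingleton.elim i 0, Subsingleton.elim j 0]

theorem recursive_haar_approx_eq_GAP_general (J : ℕ) (p q : ℕ → ℕ)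
    (hp : ∀ k < J, p k = 2 * p (k + 1)) (hq : ∀ k < J, q k = 2 * q (k + 1))
    (A : ∀ k : ℕ, Matrix (Fin (p k)) (Fin (q k)) ℝ)
    (hrec : ∀ (k : ℕ) (hk : k < J),
      A (k + 1) = haarH (p (k + 1)) *
        reindex (finCongr (hp k hk)) (finCongr (hq k hk)) (A k) * (haarH (q (k + 1)))ᵀ) :
    GAP (A J) = 2 ^ J * GAP (A 0) := by
  induction J with
  | zero => rw [pow_zero, one_mul]
  | succ J ih =>
    have GAP_level_J : GAP (A J) = 2 ^ J * GAP (A 0) :=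
      ih (fun k hk => hp k (hk.trans J.lt_succ_self)) (fun k hk => hq k (hk.trans J.lt_succ_self))
        fun k hk => hrec k (hk.trans J.lt_succ_self)
    rw [hrec J J.lt_succ_self, GAP_haarH_mul_mul_transpose, GAP_reindex, GAP_level_J, pow_succ',
      mul_assoc]

/-- The recursive Haar approximation sequence `𝒜_0 = X`,
`𝒜_{k+1} = H_(2^{J-k-1}) · 𝒜_k · H_(2^{J-k-1})ᵀ` terminates in a `1 × 1` matrix whose
unique entry is `2^J · GAP(X)`. -/
theorem recursive_haar_approx_eq_GAP (J : ℕ) (X : Matrix (Fin (2 ^ J)) (Fin (2 ^ J)) ℝ)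
    (A : ∀ k : ℕ, Matrix (Fin (2 ^ (J - k))) (Fin (2 ^ (J - k))) ℝ)
    (hA0 : A 0 = X)
    (hrec : ∀ (k : ℕ) (hk : k < J),
      A (k + 1) =
        haarH (2 ^ (J - (k + 1))) *
          (Matrix.reindex
            (finCongr (by rw [show J - k = J - (k + 1) + 1 by omega, pow_succ, Nat.mul_comm] :
              2 ^ (J - k) = 2 * 2 ^ (J - (k + 1))))
            (finCongr (by rw [show J - k = J - (k + 1) + 1 by omega, pow_succ, Nat.mul_comm] :
              2 ^ (J - k) = 2 * 2 ^ (J - (k + 1))))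
            (A k)) *
          (haarH (2 ^ (J - (k + 1))))ᵀ) :
    2 ^ (J - J) = 1 ∧ ∀ i j : Fin (2 ^ (J - J)), A J i j = 2 ^ J * GAP X := by
  have size_eq_one : 2 ^ (J - J) = 1 := by rw [Nat.sub_self, pow_zero]
  refine ⟨size_eq_one, fun i j => ?_⟩
  rw [← GAP_eq_apply size_eq_one size_eq_one (A J) i j, ← hA0]
  exact recursive_haar_approx_eq_GAP_general J (fun k => 2 ^ (J - k)) (fun k => 2 ^ (J - k))
    _ _ A hrec
end

section
/- Let X be a real H × W matrix with H, W ≥ 1, and define the sequence of matrices A_0 = X and A_{k+1} = T(P(A_k)), where P pads a matrix to even height and width by appending rows and columns whose new entries all equal the GAP of that matrix (P is the identity if both dimensions are already even), and T is the 2×2 block-averaging map. Then GAP(A_k) = GAP(X) for every k ≥ 0, and for every k ≥ ⌈log₂(max(H,W))⌉ the matrix A_k is 1 × 1 with unique entry GAP(X). -/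
open Matrix BigOperators

/-- The 2×2 block-averaging map `T`. -/
noncomputable def blockAvg {m n : ℕ} (A : Matrix (Fin (2 * m)) (Fin (2 * n)) ℝ) :
    Matrix (Fin m) (Fin n) ℝ :=
  fun i j =>
    (A ⟨2 * i, by have := i.isLt; omega⟩ ⟨2 * j, by have := j.isLt; omega⟩ +
     A ⟨2 * i + 1, by have := i.isLt; omega⟩ ⟨2 * j, by have := j.isLt; omega⟩ +
     A ⟨2 * i, by have := i.isLt; omega⟩ ⟨2 * j + 1, by have := j.isLt; omega⟩ +
     A ⟨2 * i + 1, by have := i.isLt; omega⟩ ⟨2 * j + 1, by have := j.isLt; omega⟩) / 4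

/-- The padding map `P`: pads an `m × n` matrix to size `2⌈m/2⌉ × 2⌈n/2⌉`, filling all
appended entries with the GAP of the matrix.  (If both dimensions are already even, this
is the identity.) -/
noncomputable def padGAP {m n : ℕ} (B : Matrix (Fin m) (Fin n) ℝ) :
    Matrix (Fin (2 * ((m + 1) / 2))) (Fin (2 * ((n + 1) / 2))) ℝ :=
  fun i j => if h : (i : ℕ) < m ∧ (j : ℕ) < n then B ⟨i, h.1⟩ ⟨j, h.2⟩ else GAP B

/-- Dimension sequence: `d_0 = d`, `d_{k+1} = ⌈d_k / 2⌉`. -/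
def dimSeq (d : ℕ) : ℕ → ℕ
  | 0 => d
  | k + 1 => (dimSeq d k + 1) / 2

/-- The sequence `A_0 = X`, `A_{k+1} = T(P(A_k))`. -/
noncomputable def seqTP {H W : ℕ} (X : Matrix (Fin H) (Fin W) ℝ) :
    ∀ k : ℕ, Matrix (Fin (dimSeq H k)) (Fin (dimSeq W k)) ℝ
  | 0 => X
  | k + 1 => blockAvg (padGAP (seqTP X k))

/-!
Block averaging preserves the global average because the `2 × 2` blocks partition the entries, and
padding preserves it because the appended entries deviate from the average by zero. Halving with
rounding up is adjoint to doubling: `⌈x / 2⌉ ≤ c ↔ x ≤ 2 * c`. So `dimSeq d k ≤ c ↔ d ≤ 2 ^ k * c`,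
which at `c = 0` and `c = 1` shows that a positive dimension stays positive and reaches `1` once
`d ≤ 2 ^ k`.
-/

theorem sum_fin_two_mul {M : Type*} [AddCommMonoid M] {m : ℕ} (f : Fin (2 * m) → M) :
    ∑ i, f i = ∑ i : Fin m, (f ⟨2 * i, by lia⟩ + f ⟨2 * i + 1, by lia⟩) := by
  let e : Fin m × Fin 2 ≃ Fin (2 * m) := finProdFinEquiv.trans (finCongr (mul_comm m 2))
  have even (i : Fin m) : e (i, 0) = ⟨2 * i, by lia⟩ := by ext; simp [e]
  have odd (i : Fin m) : e (i, 1) = ⟨2 * i + 1, by lia⟩ := by ext; simp [e, add_comm]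
  simp only [← e.sum_comp f, Fintype.sum_prod_type, Fin.sum_univ_two, even, odd]

theorem GAP_blockAvg {m n : ℕ} (A : Matrix (Fin (2 * m)) (Fin (2 * n)) ℝ) :
    GAP (blockAvg A) = GAP A := by
  have sum_eq : ∑ i, ∑ j, A i j = 4 * ∑ i, ∑ j, blockAvg A i j := by
    simp only [sum_fin_two_mul, Finset.mul_sum, ← Finset.sum_add_distrib, blockAvg]
    refine Fintype.sum_congr _ _ fun i => Fintype.sum_congr _ _ fun j => ?_
    ring
  have card_eq : ((2 * m : ℕ) * (2 * n : ℕ) : ℝ) = 4 * (m * n) := by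
    push_cast
    ring
  rw [GAP, GAP, sum_eq, card_eq, mul_div_mul_left _ _ four_ne_zero]

theorem GAP_eq_iff_sum_sub_eq_zero {m n : ℕ} (hm : m ≠ 0) (hn : n ≠ 0)
    (X : Matrix (Fin m) (Fin n) ℝ) (c : ℝ) :
    GAP X = c ↔ ∑ p : Fin m × Fin n, (X p.1 p.2 - c) = 0 := by
  have card_ne_zero : (m * n : ℝ) ≠ 0 := by positivity
  simp [GAP, div_eq_iff card_ne_zero, Fintype.sum_prod_type, sub_eq_zero, mul_comm]

theorem GAP_padGAP {m n : ℕ} (hm : m ≠ 0) (hn : n ≠ 0) (B : Matrix (Fin m) (Fin n) ℝ) :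
    GAP (padGAP B) = GAP B := by
  have hm_le : m ≤ 2 * ((m + 1) / 2) := by lia
  have hn_le : n ≤ 2 * ((n + 1) / 2) := by lia
  rw [GAP_eq_iff_sum_sub_eq_zero (by lia) (by lia),
    ← (GAP_eq_iff_sum_sub_eq_zero hm hn B _).mp rfl]
  symm
  refine Fintype.sum_of_injective (Prod.map (Fin.castLE hm_le) (Fin.castLE hn_le))
    ((Fin.castLE_injective hm_le).prodMap (Fin.castLE_injective hn_le)) _ _ ?appended ?original
  case appended =>
    rintro ⟨i, j⟩ not_mem
    have outside : ¬((i : ℕ) < m ∧ (j : ℕ) < n) := fun h =>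
      not_mem ⟨(⟨i, h.1⟩, ⟨j, h.2⟩), rfl⟩
    simp only [padGAP, dif_neg outside, sub_self]
  case original =>
    rintro ⟨i, j⟩
    simp [padGAP]

theorem dimSeq_le_iff {d k c : ℕ} : dimSeq d k ≤ c ↔ d ≤ 2 ^ k * c := by
  induction k generalizing c with
  | zero => simp [dimSeq]
  | succ k ih =>
    calc (dimSeq d k + 1) / 2 ≤ c ↔ dimSeq d k ≤ 2 * c := by lia
      _ ↔ d ≤ 2 ^ (k + 1) * c := by rw [ih, pow_succ, mul_assoc]

theorem dimSeq_ne_zero {d : ℕ} (hd : d ≠ 0) (k : ℕ) : dimSeq d k ≠ 0 := by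
  rwa [Ne, ← Nat.le_zero, dimSeq_le_iff, mul_zero, Nat.le_zero]

theorem dimSeq_eq_one {d k : ℕ} (hd : d ≠ 0) (hk : Nat.clog 2 d ≤ k) : dimSeq d k = 1 := by
  have le_one : dimSeq d k ≤ 1 := by
    rwa [dimSeq_le_iff, mul_one, ← Nat.clog_le_iff_le_pow one_lt_two]
  exact le_antisymm le_one (Nat.one_le_iff_ne_zero.mpr (dimSeq_ne_zero hd k))

theorem GAP_seqTP {H W : ℕ} (hH : H ≠ 0) (hW : W ≠ 0) (X : Matrix (Fin H) (Fin W) ℝ) (k : ℕ) :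
    GAP (seqTP X k) = GAP X := by
  induction k with
  | zero => rfl
  | succ k ih =>
    calc GAP (blockAvg (padGAP (seqTP X k))) = GAP (padGAP (seqTP X k)) := GAP_blockAvg _
      _ = GAP (seqTP X k) := GAP_padGAP (dimSeq_ne_zero hH k) (dimSeq_ne_zero hW k) _
      _ = GAP X := ih

theorem apply_eq_GAP_of_eq_one {m n : ℕ} (hm : m = 1) (hn : n = 1) (A : Matrix (Fin m) (Fin n) ℝ)
    (i : Fin m) (j : Fin n) : A i j = GAP A := by
  subst hm hn
  simp [GAP, Subsingleton.elim i 0, Subsingleton.elim j 0]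

theorem seqTP_GAP_invariant_and_terminal (H W : ℕ) (hH : 1 ≤ H) (hW : 1 ≤ W)
    (X : Matrix (Fin H) (Fin W) ℝ) :
    (∀ k : ℕ, GAP (seqTP X k) = GAP X) ∧
    (∀ k : ℕ, Nat.clog 2 (max H W) ≤ k →
      dimSeq H k = 1 ∧ dimSeq W k = 1 ∧ ∀ i j, seqTP X k i j = GAP X) := by
  rw [Nat.one_le_iff_ne_zero] at hH hW
  refine ⟨GAP_seqTP hH hW X, fun k hk => ?_⟩
  have hH_one : dimSeq H k = 1 :=
    dimSeq_eq_one hH ((Nat.clog_mono_right 2 (le_max_left H W)).trans hk)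
  have hW_one : dimSeq W k = 1 :=
    dimSeq_eq_one hW ((Nat.clog_mono_right 2 (le_max_right H W)).trans hk)
  exact ⟨hH_one, hW_one, fun i j =>
    (apply_eq_GAP_of_eq_one hH_one hW_one _ i j).trans (GAP_seqTP hH hW X k)⟩
end
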